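/- For 0 < d ≤ √2, with α* = arcsin(d/2), Ξ(d) = [0,π] × [α*, π−α*], C(d,σ,δ) = min(L(d,σ,δ), R(d,σ,δ)), and A(d) = sup{ C(d,σ,δ) : (σ,δ) ∈ Ξ(d) }, one has C(d, π/2, π/2) < A(d); in particular C(d, π/2, π/2) = 3π − 4·arcsin(√(d² + 4)/4) < 7π/3 ≤ A(d). -/

import Mathlib

open Real

/-- Distance between the centers of the two left disks, in `(σ, δ)` coordinates. -/
noncomputable def dL (d σ δ : ℝ) : ℝ :=
  Real.sqrt (d ^ 2 - 4 * d * Real.sin δ * Real.cos σ + 4 * Real.sin δ ^ 2)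

/-- Distance between the centers of the two right disks, in `(σ, δ)` coordinates. -/
noncomputable def dR (d σ δ : ℝ) : ℝ :=
  Real.sqrt (d ^ 2 + 4 * d * Real.sin δ * Real.cos σ + 4 * Real.sin δ ^ 2)

/-- Length of the LRL-type bounded-curvature path. -/
noncomputable def Lfun (d σ δ : ℝ) : ℝ :=
  2 * π - 4 * Real.arcsin (dL d σ δ / 4) + 2 * δ

/-- Length of the RLR-type bounded-curvature path. -/
noncomputable def Rfun (d σ δ : ℝ) : ℝ :=
  4 * π - 4 * Real.arcsin (dR d σ δ / 4) - 2 * δ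

/-- Minimum of the LRL- and RLR-path lengths. -/
noncomputable def Cfun (d σ δ : ℝ) : ℝ :=
  min (Lfun d σ δ) (Rfun d σ δ)

/-- The supremum of `Cfun` over the rectangle `Ξ(d) = [0, π] × [α*, π - α*]`,
where `α* = arcsin (d/2)`. -/
noncomputable def Afun (d : ℝ) : ℝ :=
  sSup ((fun p : ℝ × ℝ => Cfun d p.1 p.2) ''
    (Set.Icc 0 π ×ˢ Set.Icc (Real.arcsin (d / 2)) (π - Real.arcsin (d / 2))))

theorem Afun_ge (d σ δ c : ℝ) (hσ : σ ∈ Set.Icc 0 π)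
    (hδ : δ ∈ Set.Icc (Real.arcsin (d / 2)) (π - Real.arcsin (d / 2)))
    (hL : c ≤ Lfun d σ δ) (hR : c ≤ Rfun d σ δ) : c ≤ Afun d := by
  refine le_trans (le_min hL hR) ?_
  refine le_csSup ?_ ⟨(σ, δ), ⟨hσ, hδ⟩, rfl⟩
  refine ⟨2 * π + 2 * π + 2 * (π + π / 2), ?_⟩
  rintro _ ⟨⟨a, b⟩, ⟨_, hb⟩, rfl⟩
  refine le_trans (min_le_left _ _) ?_
  have h1 := Real.neg_pi_div_two_le_arcsin (dL d a b / 4)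
  have h2 := Real.neg_pi_div_two_le_arcsin (d / 2)
  have h3 := hb.2
  simp only [Lfun] at *
  linarith

theorem dL_zero (d δ : ℝ) (h : d ≤ 2 * sin δ) : dL d 0 δ = 2 * sin δ - d := by
  rw [dL, cos_zero, show d ^ 2 - 4 * d * sin δ * 1 + 4 * sin δ ^ 2 = (2 * sin δ - d) ^ 2 by ring]
  exact Real.sqrt_sq (by linarith)

theorem dR_zero (d δ : ℝ) (h : 0 ≤ 2 * sin δ + d) : dR d 0 δ = 2 * sin δ + d := by
  rw [dR, cos_zero, show d ^ 2 + 4 * d * sin δ * 1 + 4 * sin δ ^ 2 = (2 * sin δ + d) ^ 2 by ring]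
  exact Real.sqrt_sq h

theorem A_ge (d : ℝ) (hd0 : 0 < d) (hd2 : d ≤ Real.sqrt 2) : 7 * π / 3 ≤ Afun d := by
  have hpi := Real.pi_pos
  have h2 : Real.sqrt 2 ^ 2 = 2 := Real.sq_sqrt (by norm_num)
  have h3 : Real.sqrt 3 ^ 2 = 3 := Real.sq_sqrt (by norm_num)
  have h3p : 0 < Real.sqrt 3 := by positivity
  have h2p : 0 < Real.sqrt 2 := by positivity
  have hs2 : d ≤ 2 := by nlinarith
  have hsin : sin (arcsin (d / 2)) = d / 2 := Real.sin_arcsin (by linarith) (by linarith)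
  rcases le_total 1 d with h1 | h1
  · have ha : π / 6 ≤ arcsin (d / 2) := by
      rw [Real.le_arcsin_iff_sin_le ⟨by linarith, by linarith⟩ ⟨by linarith, by linarith⟩,
        Real.sin_pi_div_six]
      linarith
    have hb : arcsin (d / 2) ≤ π / 4 := by
      rw [Real.arcsin_le_iff_le_sin' ⟨by linarith, by linarith⟩, Real.sin_pi_div_four]
      linarith
    refine Afun_ge d 0 (arcsin (d / 2)) _ ⟨le_rfl, hpi.le⟩ ⟨le_rfl, by linarith⟩ ?_ ?_
    · rw [Lfun, dL_zero _ _ (by linarith), hsin, show (2 * (d / 2) - d) / 4 = 0 by ring,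
        Real.arcsin_zero]
      linarith
    · rw [Rfun, dR_zero _ _ (by linarith), hsin, show (2 * (d / 2) + d) / 4 = d / 2 by ring]
      have : arcsin (d / 2) * 6 ≤ 5 * π / 3 := by linarith
      linarith
  · obtain ⟨e, he⟩ : ∃ e, e = arcsin (d / (2 * Real.sqrt 3)) := ⟨_, rfl⟩
    have h31 : 1 ≤ Real.sqrt 3 := by nlinarith
    have hx0 : 0 ≤ d / (2 * Real.sqrt 3) := by positivity
    have hx1 : d / (2 * Real.sqrt 3) ≤ 1 / 2 := by
      rw [div_le_iff₀ (by positivity)]; linarith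
    have hse : sin e = d / (2 * Real.sqrt 3) := by
      rw [he]; exact Real.sin_arcsin (by linarith) (by linarith)
    have hse' : Real.sqrt 3 * sin e = d / 2 := by
      rw [hse]; field_simp
    have he0 : 0 ≤ e := by rw [he]; exact Real.arcsin_nonneg.2 hx0
    have hep : 0 < e := by rw [he]; exact Real.arcsin_pos.2 (by positivity)
    have he6 : e ≤ π / 6 := by
      rw [he, Real.arcsin_le_iff_le_sin' ⟨by linarith, by linarith⟩, Real.sin_pi_div_six]
      exact hx1
    have hsd : sin (π / 2 - 2 * e) = cos (2 * e) := Real.sin_pi_div_two_sub _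
    have hcc : cos (2 * e) ≤ cos e := Real.cos_le_cos_of_nonneg_of_le_pi he0 (by linarith) (by linarith)
    have hc2 : cos (2 * e) = 1 - 2 * sin e ^ 2 := by
      rw [Real.cos_two_mul, Real.cos_sq']; ring
    have hsl : sin e ≤ 1 / 2 := by rw [hse]; exact hx1
    have hsp : 0 ≤ sin e := by rw [hse]; exact hx0
    have hch : 1 / 2 ≤ cos (2 * e) := by nlinarith
    have hda : arcsin (d / 2) ≤ π / 2 - 2 * e := by
      rw [Real.arcsin_le_iff_le_sin' ⟨by linarith, by linarith⟩, hsd]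
      linarith
    refine Afun_ge d 0 (π / 2 - 2 * e) _ ⟨le_rfl, hpi.le⟩ ⟨hda, by linarith⟩ ?_ ?_
    · rw [Lfun, dL_zero _ _ (by linarith), hsd]
      have : arcsin ((2 * cos (2 * e) - d) / 4) ≤ π / 6 - e := by
        rw [Real.arcsin_le_iff_le_sin' ⟨by linarith, by linarith⟩, Real.sin_sub,
          Real.sin_pi_div_six, Real.cos_pi_div_six]
        linarith
      linarith
    · rw [Rfun, dR_zero _ _ (by linarith), hsd]
      have : arcsin ((2 * cos (2 * e) + d) / 4) ≤ π / 6 + e := by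
        rw [Real.arcsin_le_iff_le_sin' ⟨by linarith, by linarith⟩, Real.sin_add,
          Real.sin_pi_div_six, Real.cos_pi_div_six]
        linarith
      linarith

/-- For `0 < d ≤ √2`, one has `C(d, π/2, π/2) < A(d)`;
in particular `C(d, π/2, π/2) = 3π - 4·arcsin (√(d² + 4) / 4) < 7π/3 ≤ A(d)`. -/
theorem C_center_less_than_A (d : ℝ) (hd0 : 0 < d) (hd2 : d ≤ Real.sqrt 2) :
    Cfun d (π / 2) (π / 2) < Afun d ∧
    Cfun d (π / 2) (π / 2) = 3 * π - 4 * Real.arcsin (Real.sqrt (d ^ 2 + 4) / 4) ∧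
    3 * π - 4 * Real.arcsin (Real.sqrt (d ^ 2 + 4) / 4) < 7 * π / 3 ∧
    7 * π / 3 ≤ Afun d := by
  have hpi := Real.pi_pos
  have h2 : Real.sqrt 2 ^ 2 = 2 := Real.sq_sqrt (by norm_num)
  have hA := A_ge d hd0 hd2
  have hC : Cfun d (π / 2) (π / 2) = 3 * π - 4 * Real.arcsin (Real.sqrt (d ^ 2 + 4) / 4) := by
    simp only [Cfun, Lfun, Rfun, dL, dR, Real.sin_pi_div_two, Real.cos_pi_div_two]
    rw [show d ^ 2 - 4 * d * 1 * 0 + 4 * 1 ^ 2 = d ^ 2 + 4 by ring,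
      show d ^ 2 + 4 * d * 1 * 0 + 4 * 1 ^ 2 = d ^ 2 + 4 by ring]
    rw [min_eq_left (by linarith)]
    ring
  have hlt : 3 * π - 4 * Real.arcsin (Real.sqrt (d ^ 2 + 4) / 4) < 7 * π / 3 := by
    have : π / 6 < Real.arcsin (Real.sqrt (d ^ 2 + 4) / 4) := by
      rw [Real.lt_arcsin_iff_sin_lt' ⟨by linarith, by linarith⟩, Real.sin_pi_div_six]
      have : 2 < Real.sqrt (d ^ 2 + 4) := Real.lt_sqrt_of_sq_lt (by nlinarith)
      linarith
    linarith
  exact ⟨by rw [hC]; exact lt_of_lt_of_le hlt hA, hC, hlt, hA⟩
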